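/- Let G be a group and K a field of characteristic zero (or more specifically K = ℂ). If a, b ∈ K[G] satisfy ab = 1, then ba = 1; that is, the group algebra K[G] is directly finite. Equivalently, the Jacobson algebra R = K⟨x,y⟩/(xy−1) does not embed as a K-algebra into any group algebra K[G]. -/

import Mathlib

noncomputable section

/-- The defining relation of the Toeplitz/Jacobson algebra: `x * y = 1`. -/
inductive ToeplitzRel (K : Type*) [Field K] :
    FreeAlgebra K (Fin 2) → FreeAlgebra K (Fin 2) → Prop
  | rel : ToeplitzRel K (FreeAlgebra.ι K 0 * FreeAlgebra.ι K 1) 1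

/-- The Toeplitz/Jacobson algebra `R = K⟨x,y⟩/(xy-1)`. -/
abbrev Toeplitz (K : Type*) [Field K] := RingQuot (ToeplitzRel K)

variable (K : Type*) [Field K]

/-- The image of the generator `x` in `R`. -/
def tx : Toeplitz K := RingQuot.mkAlgHom K (ToeplitzRel K) (FreeAlgebra.ι K 0)

/-- The image of the generator `y` in `R`. -/
def ty : Toeplitz K := RingQuot.mkAlgHom K (ToeplitzRel K) (FreeAlgebra.ι K 1)

/-- `f n = y^(n-1) x^(n-1) - y^n x^n`. -/
def tf (n : ℕ) : Toeplitz K := ty K ^ (n-1) * tx K ^ (n-1) - ty K ^ n * tx K ^ n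

/-!
An idempotent `E` of the group von Neumann algebra has the same range as an orthogonal projection
`P` of that algebra, and `tr P = tr (E * P) = tr (P * E) = tr E`. The trace is faithful on
projections since `tr P = ‖P δ₁‖ ^ 2` and `P` commutes with right translations. If `A * B = 1`,
the idempotent `1 - B * A` has trace `tr (A * B) - tr (B * A) = 0`, so it vanishes. Hence `ℂ[G]`,
acting faithfully on `ℓ²(G)`, is directly finite. Over a domain of characteristic zero, the
coefficients of two given elements lie in a finitely generated subring, which embeds in `ℂ`.
-/

section StarProjection

theorem commute_of_mul_eq_of_commute {A : Type*} [Semigroup A] [StarMul A] {e p t : A}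
    (hp : IsSelfAdjoint p) (hpe : p * e = e) (hep : e * p = p)
    (ht : Commute e t) (ht' : Commute e (star t)) : Commute p t := by
  have compress {s : A} (hs : Commute e s) : p * (s * p) = s * p := calc
    p * (s * p) = p * (s * (e * p)) := by rw [hep]
    _ = p * (e * (s * p)) := by rw [← mul_assoc s, ← hs.eq, mul_assoc]
    _ = s * (e * p) := by rw [← mul_assoc p, hpe, ← mul_assoc, hs.eq, mul_assoc]
    _ = s * p := by rw [hep]
  calc
    p * t = star (star t * p) := by rw [star_mul, star_star, hp.star_eq]
    _ = star (p * (star t * p)) := by rw [compress ht']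
    _ = p * (t * p) := by rw [star_mul, star_mul, star_star, hp.star_eq, mul_assoc]
    _ = t * p := compress ht

variable {𝕜 H : Type*} [RCLike 𝕜] [NormedAddCommGroup H] [InnerProductSpace 𝕜 H] [CompleteSpace H]

theorem exists_isStarProjection_mul_eq {E : H →L[𝕜] H} (hE : IsIdempotentElem E) :
    ∃ P : H →L[𝕜] H, IsStarProjection P ∧ P * E = E ∧ E * P = P := by
  have := ContinuousLinearMap.IsIdempotentElem.hasOrthogonalProjection_range hE
  refine ⟨E.range.starProjection, isStarProjection_starProjection, ?_, ?_⟩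
  · ext x
    exact Submodule.starProjection_eq_self_iff.2 ⟨x, rfl⟩
  · ext x
    exact (LinearMap.IsIdempotentElem.mem_range_iff
      (ContinuousLinearMap.IsIdempotentElem.toLinearMap hE)).1
        (Submodule.starProjection_apply_mem _ x)

theorem exists_isStarProjection_mem_centralizer {s : Set (H →L[𝕜] H)} {E : H →L[𝕜] H}
    (hE : IsIdempotentElem E) (hEs : E ∈ StarSubalgebra.centralizer 𝕜 s) :
    ∃ P ∈ StarSubalgebra.centralizer 𝕜 s, IsStarProjection P ∧ P * E = E ∧ E * P = P := by
  obtain ⟨P, hP, hPE, hEP⟩ := exists_isStarProjection_mul_eq hE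
  have hPs {T : H →L[𝕜] H} := commute_of_mul_eq_of_commute (t := T) hP.isSelfAdjoint hPE hEP
  rw [StarSubalgebra.mem_centralizer_iff] at hEs
  refine ⟨P, (StarSubalgebra.mem_centralizer_iff 𝕜).2 fun T hT ↦ ?_, hP, hPE, hEP⟩
  have hT₁ : Commute E T := (hEs T hT).1.symm
  have hT₂ : Commute E (star T) := (hEs T hT).2.symm
  exact ⟨(hPs hT₁ hT₂).eq.symm, (hPs hT₂ (by rwa [star_star])).eq.symm⟩

end StarProjection

section PermutationUnitary

variable {ι 𝕜 H : Type*} [RCLike 𝕜] [NormedAddCommGroup H] [InnerProductSpace 𝕜 H]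

theorem clm_ext_hilbertBasis (b : HilbertBasis ι 𝕜 H) {S T : H →L[𝕜] H}
    (h : ∀ i, S (b i) = T (b i)) : S = T := by
  refine ContinuousLinearMap.ext_on (s := Set.range b) ?_ (Set.forall_mem_range.2 h)
  exact Submodule.dense_iff_topologicalClosure_eq_top.2 b.dense_span

variable [CompleteSpace H]

/-- The linear isometry permuting the vectors of a Hilbert basis, built as the change of basis from
`b` to `b ∘ σ`. -/
def permIsometry (b : HilbertBasis ι 𝕜 H) (σ : Equiv.Perm ι) : H ≃ₗᵢ[𝕜] H :=
  b.repr.trans (HilbertBasis.mk (b.orthonormal.comp σ σ.injective)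
    (by rw [σ.surjective.range_comp b, b.dense_span])).repr.symm

@[simp]
theorem permIsometry_apply (b : HilbertBasis ι 𝕜 H) (σ : Equiv.Perm ι) (i : ι) :
    permIsometry b σ (b i) = b (σ i) := by
  classical
  rw [permIsometry, LinearIsometryEquiv.trans_apply, b.repr_self, HilbertBasis.repr_symm_single,
    HilbertBasis.coe_mk, Function.comp_apply]

/-- The unitary representation of `Equiv.Perm ι` permuting the vectors of a Hilbert basis. -/
def permUnitary (b : HilbertBasis ι 𝕜 H) : Equiv.Perm ι →* unitary (H →L[𝕜] H) where
  toFun σ := Unitary.linearIsometryEquiv.symm (permIsometry b σ)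
  map_one' := Subtype.ext <| clm_ext_hilbertBasis b fun i ↦ by simp
  map_mul' σ τ := Subtype.ext <| clm_ext_hilbertBasis b fun i ↦ by simp

@[simp]
theorem permUnitary_apply (b : HilbertBasis ι 𝕜 H) (σ : Equiv.Perm ι) (i : ι) :
    (permUnitary b σ : H →L[𝕜] H) (b i) = b (σ i) :=
  permIsometry_apply b σ i

end PermutationUnitary

section GroupVonNeumannAlgebra

open scoped InnerProductSpace

variable {𝕜 G H : Type*} [RCLike 𝕜] [Group G] [NormedAddCommGroup H] [InnerProductSpace 𝕜 H]
  (b : HilbertBasis G 𝕜 H)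

/-- The canonical trace of the group von Neumann algebra, defined on all operators. -/
def vonNeumannTrace : (H →L[𝕜] H) →L[𝕜] 𝕜 :=
  innerSL 𝕜 (b 1) ∘L ContinuousLinearMap.apply 𝕜 H (b 1)

theorem vonNeumannTrace_apply (T : H →L[𝕜] H) : vonNeumannTrace b T = ⟪b 1, T (b 1)⟫_𝕜 :=
  rfl

variable [CompleteSpace H]

/-- Right translation by `g` on `ℓ²(G)`, modelled as any Hilbert space with a Hilbert basis indexed
by `G`. -/
def rightTranslation (g : G) : unitary (H →L[𝕜] H) :=
  permUnitary b (Equiv.mulRight g)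

/-- The group von Neumann algebra, encoded as the commutant of the right translations. -/
def groupVonNeumannAlgebra : StarSubalgebra 𝕜 (H →L[𝕜] H) :=
  StarSubalgebra.centralizer 𝕜 (Set.range fun g ↦ (rightTranslation b g : H →L[𝕜] H))

variable {b}

theorem apply_basis_of_mem_groupVonNeumannAlgebra {T : H →L[𝕜] H}
    (hT : T ∈ groupVonNeumannAlgebra b) (g : G) :
    T (b g) = (rightTranslation b g : H →L[𝕜] H) (T (b 1)) := by
  have := ((StarSubalgebra.mem_centralizer_iff 𝕜).1 hT _ ⟨g, rfl⟩).1
  simpa [rightTranslation] using congr($this (b 1)).symm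

theorem inner_basis_one_apply_basis {T : H →L[𝕜] H} (hT : T ∈ groupVonNeumannAlgebra b) (g : G) :
    ⟪b 1, T (b g)⟫_𝕜 = ⟪b g⁻¹, T (b 1)⟫_𝕜 := by
  rw [apply_basis_of_mem_groupVonNeumannAlgebra hT,
    ← Unitary.inner_map_map (rightTranslation b g) (b g⁻¹)]
  simp [rightTranslation]

theorem eq_zero_of_apply_basis_one_eq_zero {T : H →L[𝕜] H} (hT : T ∈ groupVonNeumannAlgebra b)
    (h : T (b 1) = 0) : T = 0 :=
  clm_ext_hilbertBasis b fun g ↦ by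
    rw [apply_basis_of_mem_groupVonNeumannAlgebra hT, h, map_zero, zero_apply]

theorem vonNeumannTrace_mul {S T : H →L[𝕜] H} (hS : S ∈ groupVonNeumannAlgebra b) :
    vonNeumannTrace b (S * T) = ∑' g, ⟪b g⁻¹, S (b 1)⟫_𝕜 * ⟪b g, T (b 1)⟫_𝕜 := by
  rw [vonNeumannTrace_apply, mul_apply_eq_comp, ← ContinuousLinearMap.adjoint_inner_left,
    ← b.tsum_inner_mul_inner]
  simp_rw [ContinuousLinearMap.adjoint_inner_left, inner_basis_one_apply_basis hS]

theorem vonNeumannTrace_mul_comm {S T : H →L[𝕜] H} (hS : S ∈ groupVonNeumannAlgebra b)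
    (hT : T ∈ groupVonNeumannAlgebra b) :
    vonNeumannTrace b (S * T) = vonNeumannTrace b (T * S) := by
  rw [vonNeumannTrace_mul hS, vonNeumannTrace_mul hT, ← (Equiv.inv G).tsum_eq]
  simp [mul_comm]

theorem eq_zero_of_isStarProjection_of_vonNeumannTrace_eq_zero {P : H →L[𝕜] H}
    (hP : IsStarProjection P) (hPb : P ∈ groupVonNeumannAlgebra b) (h : vonNeumannTrace b P = 0) :
    P = 0 := by
  refine eq_zero_of_apply_basis_one_eq_zero hPb (inner_self_eq_zero (𝕜 := 𝕜).1 ?_)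
  rw [← ContinuousLinearMap.adjoint_inner_right, ← ContinuousLinearMap.star_eq_adjoint,
    hP.isSelfAdjoint.star_eq, ← mul_apply_eq_comp, hP.isIdempotentElem.eq]
  exact h

theorem eq_zero_of_isIdempotentElem_of_vonNeumannTrace_eq_zero {E : H →L[𝕜] H}
    (hE : IsIdempotentElem E) (hEb : E ∈ groupVonNeumannAlgebra b)
    (h : vonNeumannTrace b E = 0) : E = 0 := by
  obtain ⟨P, hPb, hP, hPE, hEP⟩ := exists_isStarProjection_mem_centralizer hE hEb
  have hP₀ : vonNeumannTrace b P = 0 := by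
    rw [← hEP, vonNeumannTrace_mul_comm hEb hPb, hPE, h]
  rw [← hPE, eq_zero_of_isStarProjection_of_vonNeumannTrace_eq_zero hP hPb hP₀, zero_mul]

instance isDedekindFiniteMonoid_groupVonNeumannAlgebra :
    IsDedekindFiniteMonoid (groupVonNeumannAlgebra b) where
  mul_eq_one_symm {A B} hAB := by
    have hBA : IsIdempotentElem (B * A) := by
      rw [IsIdempotentElem, mul_assoc, ← mul_assoc A, hAB, one_mul]
    have hE : IsIdempotentElem ((1 - B * A : groupVonNeumannAlgebra b) : H →L[𝕜] H) :=
      hBA.one_sub.map (groupVonNeumannAlgebra b).subtype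
    have htr : vonNeumannTrace b ((1 - B * A : groupVonNeumannAlgebra b) : H →L[𝕜] H) = 0 := by
      rw [← hAB]
      simpa [sub_eq_zero] using vonNeumannTrace_mul_comm A.2 B.2
    have hE₀ : 1 - B * A = 0 := Subtype.ext <|
      eq_zero_of_isIdempotentElem_of_vonNeumannTrace_eq_zero hE (1 - B * A).2 htr
    exact (sub_eq_zero.1 hE₀).symm

variable (b)

/-- The left regular representation of the group algebra. -/
def leftRegular : MonoidAlgebra 𝕜 G →ₐ[𝕜] H →L[𝕜] H :=
  MonoidAlgebra.lift 𝕜 _ G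
    ((unitary (H →L[𝕜] H)).subtype.comp ((permUnitary b).comp (MulAction.toPermHom G G)))

theorem leftRegular_single_apply (g h : G) (r : 𝕜) :
    leftRegular b (MonoidAlgebra.single g r) (b h) = r • b (g * h) := by
  simp [leftRegular]

theorem leftRegular_mem_groupVonNeumannAlgebra (f : MonoidAlgebra 𝕜 G) :
    leftRegular b f ∈ groupVonNeumannAlgebra b := by
  induction f using MonoidAlgebra.induction_linear with
  | zero => simp
  | add f₁ f₂ h₁ h₂ => simpa using add_mem h₁ h₂
  | single g r =>
    refine (StarSubalgebra.mem_centralizer_iff 𝕜).2 ?_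
    rintro _ ⟨h, rfl⟩
    constructor <;> refine clm_ext_hilbertBasis b fun x ↦ ?_
    · simp [leftRegular_single_apply, rightTranslation, mul_assoc]
    · rw [← Unitary.coe_star, Unitary.star_eq_inv, rightTranslation, ← map_inv]
      simp [leftRegular_single_apply, mul_assoc]

theorem inner_leftRegular_apply (f : MonoidAlgebra 𝕜 G) (g : G) :
    ⟪b g, leftRegular b f (b 1)⟫_𝕜 = f.coeff g := by
  classical
  induction f using MonoidAlgebra.induction_linear with
  | zero => simp
  | add f₁ f₂ h₁ h₂ => simp [inner_add_right, h₁, h₂]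
  | single h r =>
    simp [leftRegular_single_apply, inner_smul_right, orthonormal_iff_ite.1 b.orthonormal g h,
      Finsupp.single_apply, eq_comm]

theorem leftRegular_injective : Function.Injective (leftRegular b) := fun f₁ f₂ h ↦ by
  ext g
  rw [← inner_leftRegular_apply b, h, inner_leftRegular_apply]

end GroupVonNeumannAlgebra

theorem isDedekindFiniteMonoid_monoidAlgebra_of_rclike (𝕜 G : Type*) [RCLike 𝕜] [Group G] :
    IsDedekindFiniteMonoid (MonoidAlgebra 𝕜 G) :=
  let b : HilbertBasis G 𝕜 (lp (fun _ : G ↦ 𝕜) 2) := default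
  have : IsDedekindFiniteMonoid (groupVonNeumannAlgebra b).toSubalgebra :=
    isDedekindFiniteMonoid_groupVonNeumannAlgebra (b := b)
  .of_injective
    ((leftRegular b).codRestrict (groupVonNeumannAlgebra b).toSubalgebra
      (leftRegular_mem_groupVonNeumannAlgebra b))
    ((AlgHom.injective_codRestrict _ _ _).2 (leftRegular_injective b))

section ChangeOfCoefficients

theorem isDedekindFiniteMonoid_monoidAlgebra_of_injective {R S M : Type*} [Semiring R] [Semiring S]
    [Monoid M] {f : R →+* S} (hf : Function.Injective f)
    [IsDedekindFiniteMonoid (MonoidAlgebra S M)] : IsDedekindFiniteMonoid (MonoidAlgebra R M) :=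
  .of_injective (MonoidAlgebra.mapRingHom M f) (MonoidAlgebra.map_injective f.toAddMonoidHom hf)

theorem isDedekindFiniteMonoid_monoidAlgebra_of_fg (k : Type*) {R M : Type*} [CommSemiring k]
    [Semiring R] [Algebra k R] [Monoid M]
    (h : ∀ S : Subalgebra k R, S.FG → IsDedekindFiniteMonoid (MonoidAlgebra S M)) :
    IsDedekindFiniteMonoid (MonoidAlgebra R M) where
  mul_eq_one_symm {a b} hab := by
    let s : Set R := Set.range a.coeff ∪ Set.range b.coeff
    have hs : s.Finite := a.coeff.finite_range.union b.coeff.finite_range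
    let S := Algebra.adjoin k s
    have := h S (Subalgebra.fg_def.2 ⟨s, hs, rfl⟩)
    let incl : MonoidAlgebra S M →+* MonoidAlgebra R M := MonoidAlgebra.mapRingHom M S.val.toRingHom
    have incl_injective : Function.Injective incl :=
      MonoidAlgebra.map_injective S.val.toAddMonoidHom Subtype.val_injective
    have mem_range {c : MonoidAlgebra R M} (hc : Set.range c.coeff ⊆ s) : c ∈ Set.range incl := by
      refine (MonoidAlgebra.range_map S.val.toAddMonoidHom).ge fun m ↦ ?_
      exact ⟨⟨c.coeff m, Algebra.subset_adjoin (hc ⟨m, rfl⟩)⟩, rfl⟩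
    obtain ⟨a', ha'⟩ := mem_range Set.subset_union_left
    obtain ⟨b', hb'⟩ := mem_range Set.subset_union_right
    rw [← ha', ← hb', ← map_mul, map_eq_one_iff incl incl_injective] at hab ⊢
    exact mul_eq_one_symm hab

end ChangeOfCoefficients

section ComplexEmbedding

open Cardinal

theorem exists_injective_ringHom_complex {R : Type*} [CommRing R] [IsDomain R] [CharZero R]
    (hR : #R ≤ 𝔠) : ∃ f : R →+* ℂ, Function.Injective f := by
  -- Adjoining the reals as indeterminates makes the cardinality exactly that of the continuum.
  let F := FractionRing (MvPolynomial ℝ R)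
  let A := AlgebraicClosure F
  have hF : #F = 𝔠 := by
    rw [FractionRing.cardinalMk, MvPolynomial.cardinalMk_eq_max_lift]
    have hR' : lift #R ≤ 𝔠 := by simpa using hR
    rw [mk_real, lift_continuum, max_eq_right hR', max_eq_left aleph0_le_continuum]
  have hA : #A = 𝔠 := by
    refine le_antisymm ?_ (hF ▸ mk_le_of_injective (algebraMap F A).injective)
    simpa [hF, aleph0_le_continuum] using Algebra.IsAlgebraic.cardinalMk_le_max F A
  have hRA : Function.Injective (algebraMap R A) := by
    rw [IsScalarTower.algebraMap_eq R F A, IsScalarTower.algebraMap_eq R (MvPolynomial ℝ R) F]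
    exact (algebraMap F A).injective.comp
      ((IsFractionRing.injective (MvPolynomial ℝ R) F).comp (MvPolynomial.C_injective ℝ R))
  have : CharZero A := charZero_of_injective_algebraMap hRA
  obtain ⟨e⟩ := IsAlgClosed.ringEquiv_of_equiv_of_charZero (K := A) (L := ℂ)
    (hA ▸ aleph0_lt_continuum) (by rw [← lift_mk_eq', hA, mk_complex]; simp)
  exact ⟨(e : A →+* ℂ).comp (algebraMap R A), e.injective.comp hRA⟩

theorem cardinalMk_le_aleph0_of_fg {R : Type*} [CommRing R] {S : Subalgebra ℤ R} (hS : S.FG) :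
    #S ≤ ℵ₀ := by
  obtain ⟨s, hs, rfl⟩ := Subalgebra.fg_def.1 hS
  simpa [hs.countable] using Algebra.lift_cardinalMk_adjoin_le ℤ s

end ComplexEmbedding

instance isDedekindFiniteMonoid_monoidAlgebra (R G : Type*) [CommRing R] [IsDomain R] [CharZero R]
    [Group G] : IsDedekindFiniteMonoid (MonoidAlgebra R G) := by
  refine isDedekindFiniteMonoid_monoidAlgebra_of_fg ℤ fun S hS ↦ ?_
  obtain ⟨f, hf⟩ := exists_injective_ringHom_complex
    ((cardinalMk_le_aleph0_of_fg hS).trans Cardinal.aleph0_le_continuum)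
  have := isDedekindFiniteMonoid_monoidAlgebra_of_rclike ℂ G
  exact isDedekindFiniteMonoid_monoidAlgebra_of_injective hf

section Toeplitz

variable {K}

theorem tx_mul_ty : tx K * ty K = 1 := by
  simpa [tx, ty] using RingQuot.mkAlgHom_rel K (ToeplitzRel.rel (K := K))

/-- The universal property of the Toeplitz algebra. -/
def toeplitzLift {A : Type*} [Semiring A] [Algebra K A] (u v : A) (h : u * v = 1) :
    Toeplitz K →ₐ[K] A :=
  RingQuot.liftAlgHom K ⟨FreeAlgebra.lift K ![u, v], by rintro _ _ ⟨⟩; simpa using h⟩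

theorem toeplitzLift_tx {A : Type*} [Semiring A] [Algebra K A] {u v : A} (h : u * v = 1) :
    toeplitzLift u v h (tx K) = u := by
  simp [toeplitzLift, tx]

theorem toeplitzLift_ty {A : Type*} [Semiring A] [Algebra K A] {u v : A} (h : u * v = 1) :
    toeplitzLift u v h (ty K) = v := by
  simp [toeplitzLift, ty]

variable (K)

theorem exists_end_mul_eq_one_and_mul_ne_one :
    ∃ u v : Module.End K (ℕ → K), u * v = 1 ∧ v * u ≠ 1 := by
  let shift : Module.End K (ℕ → K) := LinearMap.funLeft K K Nat.succ
  have shift_range : shift.range = ⊤ := LinearMap.range_eq_top.2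
    (LinearMap.funLeft_surjective_of_injective K K _ Nat.succ_injective)
  obtain ⟨v, hv⟩ := shift.exists_rightInverse_of_surjective shift_range
  refine ⟨shift, v, hv, fun h ↦ ?_⟩
  have shift_single : shift (Pi.single 0 1) = 0 := by
    ext n
    simp [shift, LinearMap.funLeft_apply]
  have single_eq_zero : (Pi.single 0 1 : ℕ → K) = 0 := by
    rw [← Module.End.one_apply (R := K) (Pi.single 0 1), ← h, Module.End.mul_apply, shift_single,
      map_zero]
  simp at single_eq_zero

theorem ty_mul_tx_ne_one : ty K * tx K ≠ 1 := fun h ↦ by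
  obtain ⟨u, v, huv, hvu⟩ := exists_end_mul_eq_one_and_mul_ne_one K
  have := congr(toeplitzLift u v huv $h)
  rw [map_mul, toeplitzLift_tx, toeplitzLift_ty, map_one] at this
  exact hvu this

theorem not_isDedekindFiniteMonoid_toeplitz : ¬ IsDedekindFiniteMonoid (Toeplitz K) :=
  fun _ ↦ ty_mul_tx_ne_one K (mul_eq_one_symm tx_mul_ty)

end Toeplitz

theorem groupAlgebra_directlyFinite_char_zero_general (R G : Type*) [CommRing R] [IsDomain R]
    [CharZero R] [Group G] :
    (∀ a b : MonoidAlgebra R G, a * b = 1 → b * a = 1) ∧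
    (∀ φ : Toeplitz K →* MonoidAlgebra R G, ¬ Function.Injective φ) :=
  ⟨fun _ _ ↦ mul_eq_one_symm,
    fun φ hφ ↦ not_isDedekindFiniteMonoid_toeplitz K (.of_injective φ hφ)⟩

/-- Kaplansky's theorem in characteristic zero: for any group `G` and field `K` of
characteristic zero, the group algebra `K[G]` is directly finite; equivalently, the
Jacobson algebra `R = K⟨x,y⟩/(xy-1)` does not embed as a `K`-algebra into any group
algebra `K[G]`. -/
theorem groupAlgebra_directlyFinite_char_zero [CharZero K] :
    (∀ (G : Type*) [Group G] (a b : MonoidAlgebra K G), a * b = 1 → b * a = 1) ∧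
    (∀ (G : Type*) [Group G] (φ : Toeplitz K →ₐ[K] MonoidAlgebra K G),
      ¬ Function.Injective φ) :=
  ⟨fun G _ ↦ (groupAlgebra_directlyFinite_char_zero_general K K G).1,
    fun G _ φ ↦ (groupAlgebra_directlyFinite_char_zero_general K K G).2 φ⟩
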